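/- Let φ : [0,∞) → E be a continuously differentiable curve in a real normed vector space E with ‖φ'(t)‖ ≤ G₁ for all t ≥ 0, let κ > 0, and let Y : [0,∞) → E solve the relaxation equation Y'(t) = κ·(φ(t) − Y(t)). Then for every t ≥ 0, ‖Y(t) − φ(t)‖ ≤ e^{−κt}·‖Y(0) − φ(0)‖ + G₁/κ. -/

import Mathlib

/-!
The defect `u = Y - φ` satisfies `u' + κ • u = -φ'`. Grönwall's inequality for `‖u'‖ ≤ κ ‖u‖ + G₁`
would lose the sign of the damping term, so one first multiplies by the integrating factor:
`exp (κ t) • u t` has derivative `-exp (κ t) • φ' t`, whose norm is at most `exp (κ t) * G₁`, and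
this is the derivative of `exp (κ t)` times the Grönwall bound with the negative constant `-κ`.
-/

open Set Real

section IntegratingFactor

variable {E : Type*} [NormedAddCommGroup E] [NormedSpace ℝ E]

theorem hasDerivAt_exp_neg_mul_sub (K a t : ℝ) :
    HasDerivAt (fun s => exp (-K * (s - a))) (-K * exp (-K * (t - a))) t := by
  simpa [mul_comm] using (((hasDerivAt_id t).sub_const a).const_mul (-K)).exp

theorem hasDerivWithinAt_exp_neg_mul_sub_smul {u : ℝ → E} {u' : E} {s : Set ℝ} {t : ℝ}
    (hu : HasDerivWithinAt u u' s t) (K a : ℝ) :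
    HasDerivWithinAt (fun r => exp (-K * (r - a)) • u r)
      (exp (-K * (t - a)) • (u' - K • u t)) s t := by
  refine ((hasDerivAt_exp_neg_mul_sub K a t).hasDerivWithinAt.smul hu).congr_deriv ?_
  module

theorem hasDerivAt_exp_neg_mul_sub_mul_gronwallBound (δ K ε a t : ℝ) :
    HasDerivAt (fun s => exp (-K * (s - a)) * gronwallBound δ K ε (s - a))
      (exp (-K * (t - a)) * ε) t := by
  refine ((hasDerivAt_exp_neg_mul_sub K a t).mul
    (hasDerivAt_gronwallBound_shift δ K ε t a)).congr_deriv ?_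
  ring

theorem norm_le_gronwallBound_of_norm_deriv_right_sub_smul_le {u u' : ℝ → E} {δ K ε a b : ℝ}
    (hu : ContinuousOn u (Icc a b))
    (hu' : ∀ t ∈ Ico a b, HasDerivWithinAt u (u' t) (Ici t) t)
    (ha : ‖u a‖ ≤ δ) (bound : ∀ t ∈ Ico a b, ‖u' t - K • u t‖ ≤ ε) :
    ∀ t ∈ Icc a b, ‖u t‖ ≤ gronwallBound δ K ε (t - a) := by
  intro t ht
  have norm_exp_smul (s : ℝ) (x : E) :
      ‖exp (-K * (s - a)) • x‖ = exp (-K * (s - a)) * ‖x‖ := by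
    rw [norm_smul, norm_of_nonneg (exp_nonneg _)]
  have weighted_bound :
      ‖exp (-K * (t - a)) • u t‖ ≤ exp (-K * (t - a)) * gronwallBound δ K ε (t - a) := by
    refine image_norm_le_of_norm_deriv_right_le_deriv_boundary
      (f := fun s => exp (-K * (s - a)) • u s)
      (B := fun s => exp (-K * (s - a)) * gronwallBound δ K ε (s - a))
      (ContinuousOn.smul (by fun_prop) hu)
      (fun s hs => hasDerivWithinAt_exp_neg_mul_sub_smul (hu' s hs) K a)
      (by simpa [gronwallBound_x0] using ha)
      (hasDerivAt_exp_neg_mul_sub_mul_gronwallBound δ K ε a) (fun s hs => ?_) ht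
    rw [norm_exp_smul]
    exact mul_le_mul_of_nonneg_left (bound s hs) (exp_nonneg _)
  rw [norm_exp_smul] at weighted_bound
  exact le_of_mul_le_mul_left weighted_bound (exp_pos _)

end IntegratingFactor

theorem gronwallBound_neg_le {κ ε : ℝ} (hκ : 0 < κ) (hε : 0 ≤ ε) (δ x : ℝ) :
    gronwallBound δ (-κ) ε x ≤ exp (-κ * x) * δ + ε / κ := by
  have decayed_nonneg : 0 ≤ ε / κ * exp (-κ * x) := by positivity
  calc gronwallBound δ (-κ) ε x
      = exp (-κ * x) * δ + ε / κ - ε / κ * exp (-κ * x) := by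
        rw [gronwallBound_of_K_ne_0 (neg_ne_zero.2 hκ.ne'), div_neg]
        ring
    _ ≤ exp (-κ * x) * δ + ε / κ := sub_le_self _ decayed_nonneg

theorem relaxation_tracking_general {E : Type*} [NormedAddCommGroup E] [NormedSpace ℝ E]
    {φ φ' Y : ℝ → E} {κ G₁ a b : ℝ}
    (hφc : ContinuousOn φ (Icc a b))
    (hφ : ∀ t ∈ Ico a b, HasDerivWithinAt φ (φ' t) (Ici t) t)
    (hbound : ∀ t ∈ Ico a b, ‖φ' t‖ ≤ G₁)
    (hYc : ContinuousOn Y (Icc a b))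
    (hY : ∀ t ∈ Ico a b, HasDerivWithinAt Y (κ • (φ t - Y t)) (Ici t) t) :
    ∀ t ∈ Icc a b, ‖Y t - φ t‖ ≤ gronwallBound ‖Y a - φ a‖ (-κ) G₁ (t - a) := by
  refine norm_le_gronwallBound_of_norm_deriv_right_sub_smul_le (u := fun t => Y t - φ t)
    (hYc.sub hφc) (fun t ht => (hY t ht).sub (hφ t ht)) le_rfl fun t ht => ?_
  have defect_eq : κ • (φ t - Y t) - φ' t - -κ • (Y t - φ t) = -φ' t := by module
  rw [defect_eq, norm_neg]
  exact hbound t ht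

/-- Slow–fast tracking estimate: if `Y` solves the relaxation equation
`Y' = κ • (φ - Y)` toward a continuously differentiable target `φ` whose
derivative is bounded by `G₁`, then
`‖Y t - φ t‖ ≤ e^{-κ t} ‖Y 0 - φ 0‖ + G₁ / κ` for all `t ≥ 0`. -/
theorem relaxation_tracking
    {E : Type*} [NormedAddCommGroup E] [NormedSpace ℝ E]
    (φ φ' Y : ℝ → E) (κ G₁ : ℝ) (hκ : 0 < κ)
    (hφ : ∀ t, 0 ≤ t → HasDerivAt φ (φ' t) t)
    (hφcont : ContinuousOn φ' (Set.Ici (0 : ℝ)))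
    (hbound : ∀ t, 0 ≤ t → ‖φ' t‖ ≤ G₁)
    (hY : ∀ t, 0 ≤ t → HasDerivAt Y (κ • (φ t - Y t)) t) :
    ∀ t, 0 ≤ t →
      ‖Y t - φ t‖ ≤ Real.exp (-κ * t) * ‖Y 0 - φ 0‖ + G₁ / κ := by
  intro t ht
  have hG₁ : 0 ≤ G₁ := (norm_nonneg _).trans (hbound 0 le_rfl)
  have tracking : ‖Y t - φ t‖ ≤ gronwallBound ‖Y 0 - φ 0‖ (-κ) G₁ (t - 0) :=
    relaxation_tracking_general
      (HasDerivAt.continuousOn fun s hs => hφ s hs.1)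
      (fun s hs => (hφ s hs.1).hasDerivWithinAt) (fun s hs => hbound s hs.1)
      (HasDerivAt.continuousOn fun s hs => hY s hs.1)
      (fun s hs => (hY s hs.1).hasDerivWithinAt) t (right_mem_Icc.2 ht)
  rw [sub_zero] at tracking
  exact tracking.trans (gronwallBound_neg_le hκ hG₁ _ t)
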